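/- Let G be a group and S a finite faithful generating subset of G with 1 ∈ S such that |S⁻¹S| ≤ 2|S| − 2 and S⁻¹S ≠ G. Let H be a basic atom of S (an atom of S containing 1; such an H is a subgroup), and let C be an H-right-component of S of smallest cardinality, i.e. C = S ∩ Hc for some c ∈ S and |C| ≤ |S ∩ Hx| for every x ∈ S. Then for all x, y ∈ S with (x, y) ∉ C × C, one has x⁻¹Hy ⊆ S⁻¹S. -/

import Mathlib

open Pointwise

variable {G : Type*} [Group G] [DecidableEq G]

/-- `X` belongs to the family `F(S)`: `X` is nonempty and `XS` is a (finite)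
proper subset of `G`. -/
def MemFam (S X : Finset G) : Prop :=
  X.Nonempty ∧ (↑(X * S) : Set G) ≠ Set.univ

/-- `X` is a fragment of `S`: a member of `F(S)` attaining the minimum of
`|XS| - |X|`. -/
def IsFragment (S X : Finset G) : Prop :=
  MemFam S X ∧ ∀ Y : Finset G, MemFam S Y →
    (X * S).card - X.card ≤ (Y * S).card - Y.card

/-- `X` is an atom of `S`: a fragment of smallest cardinality. -/
def IsAtomOf (S X : Finset G) : Prop :=
  IsFragment S X ∧ ∀ Y : Finset G, IsFragment S Y → X.card ≤ Y.card

/-- `S` is faithful: every atom `A` of `S` satisfies `|A| ≤ |∇(A)|`. -/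
def IsFaithful (S : Finset G) : Prop :=
  ∀ A : Finset G, IsAtomOf S A → A.card ≤ ((A * S) \ A).card

/-!
Submodularity of `X ↦ |X S|` makes `H` a block for left translation, hence a subgroup, as soon as
`|H| + |H S| ≤ |G|`. Then any two `H`-right-components of `S` in distinct cosets have more than
`|H|` elements together, because `|H S| - |H| ≤ |S⁻¹ S| - |S| ≤ |S| - 2`, and so do two copies of a
component other than `C`. The pigeonhole principle in the coset `H y` gives `x⁻¹ H y ⊆ S⁻¹ S`.

Suppose instead that `|G| < |H| + |H S|`. By duality a translate of the complement of `H S` is a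
fragment of `S⁻¹` of maximal size, and by the same submodularity it is a subgroup `K`. Counting
leaves `|G / K| = 2 c + 1`, with `S` meeting exactly `c + 1` cosets of `K`; let `M` be the set of
these cosets. For points `P, Q` of `G / K` count the `g` with `g P ∉ M` and `g Q ∈ M`: this
separation number always exceeds `|K|`. The pairs for which it is below `2 |K|` form a graph,
regular of some degree `J`, in which a vertex stabilizer fixes no neighbour of its vertex. An edge
isoperimetric bound together with parity forces exactly `2 J - 2` edges to leave `M`, which
determines the separation number of adjacent points.

Let `D` be the set of cosets met by `G \ S⁻¹ S`. If `D` were a single point, the pairs of maximal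
separation would form a perfect matching on an odd number of points. If `D` had at least two points,
it would be a vertex together with all its neighbours in the graph, hence a block, and the number of
`g` with `g D` meeting `M`, which is a multiple of `|K|`, would lie strictly between two consecutive
multiples of `|K|`. Hence `S⁻¹ S = G`, contrary to assumption.
-/

lemma not_dvd_two_mul_add_one {q w : ℕ} (hq : 4 ≤ q) (hle : w ≤ q) (hw : w ≤ 1 ∨ q ≤ w + 1) :
    ¬ q ∣ 2 * w + 1 := by
  intro hdvd
  have hqle := Nat.le_of_dvd (Nat.succ_pos _) hdvd
  suffices q ∣ 1 from absurd (Nat.le_of_dvd one_pos this) (by omega)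
  obtain hlt | rfl := hle.lt_or_eq
  · exact (Nat.dvd_add_right hdvd).1 ⟨2, by omega⟩
  · exact (Nat.dvd_add_right (dvd_mul_left w 2)).1 hdvd

section Cuts

open Finset

variable {V : Type*} [Fintype V] [DecidableEq V] (Γ : SimpleGraph V) [DecidableRel Γ.Adj]

/-- The number of edges of `Γ` leaving the vertex set `Z`. -/
def cutCard (Z : Finset V) : ℕ := #(Γ.interedges Z Zᶜ)

lemma cutCard_compl (Z : Finset V) : cutCard Γ Zᶜ = cutCard Γ Z := by
  rw [cutCard, cutCard, compl_compl]
  have := Γ.symm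
  exact Rel.card_interedges_comm Zᶜ Z

lemma cutCard_inter_add_cutCard_union_le (Y Z : Finset V) :
    cutCard Γ (Y ∩ Z) + cutCard Γ (Y ∪ Z) ≤ cutCard Γ Y + cutCard Γ Z := by
  simp only [cutCard]
  rw [← card_union_add_card_inter, ← card_union_add_card_inter (Γ.interedges Y Yᶜ)]
  refine add_le_add (card_le_card ?_) (card_le_card ?_) <;> intro p <;>
    simp only [mem_union, mem_inter, SimpleGraph.mem_interedges_iff, mem_compl] <;> tauto

lemma cutCard_sdiff_add_cutCard_sdiff_le (Y Z : Finset V) :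
    cutCard Γ (Y \ Z) + cutCard Γ (Z \ Y) ≤ cutCard Γ Y + cutCard Γ Z := by
  have submodular := cutCard_inter_add_cutCard_union_le Γ Y Zᶜ
  have union_eq : Y ∪ Zᶜ = (Z \ Y)ᶜ := by ext; simp; tauto
  rwa [union_eq, cutCard_compl, cutCard_compl, ← sdiff_eq_inter_compl] at submodular

lemma cutCard_eq_sum_card_neighborFinset_sdiff (Z : Finset V) :
    cutCard Γ Z = ∑ x ∈ Z, #(Γ.neighborFinset x \ Z) := by
  rw [cutCard, card_eq_sum_card_fiberwise (f := Prod.fst) (t := Z)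
    fun p hp ↦ (Γ.mem_interedges_iff.1 hp).1]
  refine sum_congr rfl fun x hx ↦ card_nbij' Prod.snd (fun y ↦ (x, y)) ?_ ?_ ?_ ?_ <;>
    intro y <;> simp [SimpleGraph.mem_interedges_iff] <;> grind

lemma cutCard_singleton (x : V) : cutCard Γ {x} = Γ.degree x := by
  rw [cutCard_eq_sum_card_neighborFinset_sdiff, sum_singleton,
    sdiff_singleton_eq_erase, erase_eq_of_notMem (Γ.notMem_neighborFinset_self x),
    Γ.card_neighborFinset_eq_degree]

variable {Γ}

lemma exists_adj_of_cutCard_ne_zero {Z : Finset V} (hZ : cutCard Γ Z ≠ 0) :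
    ∃ x ∈ Z, ∃ y ∉ Z, Γ.Adj x y := by
  obtain ⟨p, hp⟩ := card_ne_zero.1 hZ
  rw [Γ.mem_interedges_iff, mem_compl] at hp
  exact ⟨p.1, hp.1, p.2, hp.2⟩

lemma even_sum_card_neighborFinset_inter (Z : Finset V) :
    Even (∑ x ∈ Z, #(Γ.neighborFinset x ∩ Z)) := by
  have degree_induce (x : (Z : Set V)) :
      (Γ.induce (Z : Set V)).degree x = #(Γ.neighborFinset x ∩ Z) := by
    have map_eq := congrArg card (Γ.map_neighborFinset_induce x)
    rw [card_map, toFinset_coe] at map_eq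
    rw [← map_eq, ← SimpleGraph.card_neighborFinset_eq_degree]
    convert rfl
  have handshake := (Γ.induce (Z : Set V)).sum_degrees_eq_twice_card_edges
  simp only [degree_induce] at handshake
  rw [← sum_coe_sort]
  exact ⟨_, handshake.trans (two_mul _)⟩

section Regular

variable {J : ℕ} (hreg : Γ.IsRegularOfDegree J)
include hreg

lemma sum_card_neighborFinset_inter_add_cutCard (Z : Finset V) :
    ∑ x ∈ Z, #(Γ.neighborFinset x ∩ Z) + cutCard Γ Z = #Z * J := by
  rw [cutCard_eq_sum_card_neighborFinset_sdiff, ← sum_add_distrib, ← smul_eq_mul]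
  refine sum_eq_card_nsmul fun x _ ↦ ?_
  rw [card_inter_add_card_sdiff, Γ.card_neighborFinset_eq_degree, hreg x]

omit [DecidableEq V] in
lemma even_degree_of_odd_card (hodd : Odd (Fintype.card V)) : Even J := by
  have handshake := Γ.sum_degrees_eq_twice_card_edges
  simp only [hreg _, sum_const, card_univ, smul_eq_mul] at handshake
  have : Even (Fintype.card V * J) := handshake ▸ even_two_mul _
  exact (Nat.even_mul.1 this).resolve_left (Nat.not_even_iff_odd.2 hodd)

lemma even_cutCard (hJ : Even J) (Z : Finset V) : Even (cutCard Γ Z) := by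
  have total : Even (#Z * J) := hJ.mul_left _
  rw [← sum_card_neighborFinset_inter_add_cutCard hreg Z] at total
  exact (Nat.even_add.1 total).1 (even_sum_card_neighborFinset_inter Z)

lemma card_mul_degree_add_one_le (Z : Finset V) : #Z * (J + 1) ≤ cutCard Γ Z + #Z * #Z := by
  have inner_le : ∑ x ∈ Z, (#(Γ.neighborFinset x ∩ Z) + 1) ≤ #Z * #Z := by
    refine sum_le_card_nsmul _ _ _ fun x hx ↦ card_lt_card ?_
    exact (ssubset_iff_of_subset inter_subset_right).2 ⟨x, hx, by simp⟩
  rw [sum_add_distrib, sum_const, smul_eq_mul, mul_one] at inner_le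
  linarith [sum_card_neighborFinset_inter_add_cutCard hreg Z, mul_add_one #Z J]

lemma two_mul_degree_le_cutCard_add_two_of_two_le_card_neighborFinset_sdiff {Z : Finset V}
    (hZ : 2 ≤ #Z) (hout : ∀ z ∈ Z, 2 ≤ #(Γ.neighborFinset z \ Z)) :
    2 * J ≤ cutCard Γ Z + 2 := by
  obtain hlarge | hsmall := le_or_gt J (#Z + 1)
  · have : #Z * 2 ≤ cutCard Γ Z := by
      rw [cutCard_eq_sum_card_neighborFinset_sdiff]
      exact card_nsmul_le_sum _ _ _ hout
    linarith
  · have := card_mul_degree_add_one_le hreg Z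
    obtain ⟨t, ht⟩ := Nat.exists_eq_add_of_le hZ
    obtain ⟨u, rfl⟩ := Nat.exists_eq_add_of_lt hsmall
    rw [ht] at this ⊢
    nlinarith [Nat.zero_le (t * u)]

end Regular

section Component

variable (Γ) in
/-- The vertex set of the connected component of `v`, as a `Finset`. -/
def component (v : V) : Finset V := {x | Γ.Reachable v x}

@[simp] lemma mem_component {v x : V} : x ∈ component Γ v ↔ Γ.Reachable v x := by
  simp [component]

lemma component_eq_of_mem {v x : V} (hx : x ∈ component Γ v) : component Γ x = component Γ v := by
  ext y
  have hvx := mem_component.1 hx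
  exact ⟨fun hy ↦ mem_component.2 (hvx.trans (mem_component.1 hy)),
    fun hy ↦ mem_component.2 (hvx.symm.trans (mem_component.1 hy))⟩

lemma cutCard_component (v : V) : cutCard Γ (component Γ v) = 0 := by
  by_contra hcut
  obtain ⟨x, hx, y, hy, hxy⟩ := exists_adj_of_cutCard_ne_zero hcut
  exact hy (mem_component.2 ((mem_component.1 hx).trans hxy.reachable))

lemma cutCard_component_sdiff {v : V} {Z : Finset V} (hZ : Z ⊆ component Γ v) :
    cutCard Γ (component Γ v \ Z) = cutCard Γ Z := by
  have hC := cutCard_component (Γ := Γ) v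
  have sdiff_le := cutCard_sdiff_add_cutCard_sdiff_le Γ (component Γ v) Z
  have le_sdiff := cutCard_sdiff_add_cutCard_sdiff_le Γ (component Γ v) (component Γ v \ Z)
  rw [Finset.sdiff_sdiff_eq_self hZ] at le_sdiff
  omega

lemma degree_lt_card_component (v : V) : Γ.degree v < #(component Γ v) := by
  rw [← Γ.card_neighborFinset_eq_degree]
  refine card_lt_card ((ssubset_iff_of_subset fun x hx ↦ ?_).2 ⟨v, by simp, by simp⟩)
  exact mem_component.2 ((Γ.mem_neighborFinset v x).1 hx).reachable

lemma cutCard_ne_zero_of_subset_component {v : V} {Z : Finset V} (hZ : Z.Nonempty)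
    (hZv : Z ⊂ component Γ v) : cutCard Γ Z ≠ 0 := by
  obtain ⟨x, hx⟩ := hZ
  obtain ⟨y, hy, hyZ⟩ := exists_of_ssubset hZv
  rw [← component_eq_of_mem (hZv.1 hx), mem_component] at hy
  obtain ⟨walk⟩ := hy
  obtain ⟨d, -, hd, hd'⟩ := walk.exists_boundary_dart Z hx hyZ
  exact card_ne_zero_of_mem (Γ.mem_interedges_iff.2 ⟨hd, mem_compl.2 hd', d.adj⟩)

lemma filter_component_eq {v : V} (W : Finset V) :
    {x ∈ W | component Γ x = component Γ v} = W ∩ component Γ v := by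
  ext x
  rw [mem_filter, mem_inter]
  exact and_congr_right fun _ ↦ ⟨fun h ↦ h ▸ mem_component.2 .rfl, component_eq_of_mem⟩

lemma sum_card_inter_component (W : Finset V) :
    ∑ C ∈ univ.image (component Γ), #(W ∩ C) = #W := by
  rw [card_eq_sum_card_fiberwise (f := component Γ) (t := univ.image (component Γ))
    fun x _ ↦ mem_image_of_mem _ (mem_univ x)]
  refine sum_congr rfl fun C hC ↦ ?_
  obtain ⟨v, -, rfl⟩ := mem_image.1 hC
  rw [filter_component_eq]

lemma sum_cutCard_inter_component (W : Finset V) :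
    ∑ C ∈ univ.image (component Γ), cutCard Γ (W ∩ C) = cutCard Γ W := by
  simp only [cutCard_eq_sum_card_neighborFinset_sdiff]
  rw [← sum_fiberwise_of_maps_to (s := W) (t := univ.image (component Γ)) (g := component Γ)
    fun x _ ↦ mem_image_of_mem _ (mem_univ x)]
  refine sum_congr rfl fun C hC ↦ ?_
  obtain ⟨v, -, rfl⟩ := mem_image.1 hC
  rw [filter_component_eq]
  refine sum_congr rfl fun x hx ↦ congrArg card ?_
  ext y
  have hvx := mem_component.1 (mem_inter.1 hx).2
  simp only [mem_sdiff, SimpleGraph.mem_neighborFinset, mem_inter, mem_component, not_and]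
  exact and_congr_right fun hxy ↦
    ⟨fun h hy ↦ h hy (hvx.trans hxy.reachable), fun h hy _ ↦ h hy⟩

end Component

section Action

open MulAction

variable {A : Type*} [Group A] [MulAction A V]
  (hinv : ∀ (g : A) (x y : V), Γ.Adj (g • x) (g • y) ↔ Γ.Adj x y)
include hinv

lemma neighborFinset_smul (g : A) (x : V) :
    Γ.neighborFinset (g • x) = g • Γ.neighborFinset x := by
  ext y
  rw [← inv_smul_mem_iff, Γ.mem_neighborFinset, Γ.mem_neighborFinset, ← hinv g x, smul_inv_smul]

lemma cutCard_smul (g : A) (Z : Finset V) : cutCard Γ (g • Z) = cutCard Γ Z := by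
  simp only [cutCard_eq_sum_card_neighborFinset_sdiff]
  rw [smul_finset_def, sum_image (MulAction.injective g).injOn, ← smul_finset_def]
  simp only [neighborFinset_smul hinv, ← smul_finset_sdiff, card_smul_finset]

omit [DecidableEq V] in
lemma isRegularOfDegree_degree [IsPretransitive A V] (v : V) :
    Γ.IsRegularOfDegree (Γ.degree v) := by
  classical
  intro x
  obtain ⟨g, rfl⟩ := exists_smul_eq A v x
  rw [← Γ.card_neighborFinset_eq_degree, neighborFinset_smul hinv, card_smul_finset,
    Γ.card_neighborFinset_eq_degree]

lemma smul_component (g : A) (v : V) : g • component Γ v = component Γ (g • v) := by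
  have reachable_smul (h : A) {x y : V} (hxy : Γ.Reachable x y) : Γ.Reachable (h • x) (h • y) :=
    hxy.map ⟨(h • ·), fun {x y} ↦ (hinv h x y).2⟩
  ext x
  rw [← inv_smul_mem_iff, mem_component, mem_component]
  exact ⟨fun h ↦ by simpa using reachable_smul g h, fun h ↦ by simpa using reachable_smul g⁻¹ h⟩

lemma smul_component_eq_of_mem {g : A} {v x : V} (hx : x ∈ component Γ v)
    (hgx : g • x ∈ component Γ v) : g • component Γ v = component Γ v := by
  rw [← component_eq_of_mem hx, smul_component hinv, component_eq_of_mem hgx,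
    component_eq_of_mem hx]

lemma card_component_eq [IsPretransitive A V] (v w : V) : #(component Γ v) = #(component Γ w) := by
  obtain ⟨g, rfl⟩ := exists_smul_eq A w v
  rw [← smul_component hinv, card_smul_finset]

lemma card_component_dvd_card [IsPretransitive A V] (v : V) :
    #(component Γ v) ∣ Fintype.card V := by
  rw [← card_univ, ← sum_card_inter_component (Γ := Γ) univ]
  refine dvd_sum fun C hC ↦ ?_
  obtain ⟨w, -, rfl⟩ := mem_image.1 hC
  rw [univ_inter, card_component_eq hinv v w]

variable (Γ) in
/-- `Z` splits the connected component of `v` nontrivially: both `Z` and its complement in that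
component have at least two vertices. -/
structure SplitsComponent (v : V) (Z : Finset V) : Prop where
  subset : Z ⊆ component Γ v
  two_le_card : 2 ≤ #Z
  card_add_two_le : #Z + 2 ≤ #(component Γ v)

variable (Γ) in
/-- Among the sets splitting the component of `v` nontrivially, `Z` has the fewest leaving edges
and, subject to that, the fewest vertices. -/
structure IsMinSplit (v : V) (Z : Finset V) : Prop where
  splits : SplitsComponent Γ v Z
  cutCard_le : ∀ Y, SplitsComponent Γ v Y → cutCard Γ Z ≤ cutCard Γ Y
  card_le : ∀ Y, SplitsComponent Γ v Y → cutCard Γ Y ≤ cutCard Γ Z → #Z ≤ #Y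

omit hinv in
lemma exists_isMinSplit {v : V} {Y : Finset V} (hY : SplitsComponent Γ v Y) :
    ∃ Z, IsMinSplit Γ v Z := by
  classical
  obtain ⟨Z, hZ, hmin⟩ := exists_min_image {Z | SplitsComponent Γ v Z}
    (fun Z ↦ toLex (cutCard Γ Z, #Z)) ⟨Y, by simpa using hY⟩
  simp only [mem_filter_univ, Prod.Lex.toLex_le_toLex] at hZ hmin
  exact ⟨Z, hZ, fun X hX ↦ (hmin X hX).elim le_of_lt fun h ↦ h.1.le,
    fun X hX hle ↦ (hmin X hX).elim (fun h ↦ absurd hle h.not_ge) And.right⟩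

omit hinv in
lemma IsMinSplit.two_mul_card_le {v : V} {Z : Finset V} (hZ : IsMinSplit Γ v Z) :
    2 * #Z ≤ #(component Γ v) := by
  obtain ⟨hZv, hZ2, hZq⟩ := hZ.splits
  have card_sdiff := card_sdiff_add_card_eq_card hZv
  have := hZ.card_le (component Γ v \ Z) ⟨sdiff_subset, by omega, by omega⟩
    (cutCard_component_sdiff hZv).le
  omega

lemma IsMinSplit.isBlock {v : V} {Z : Finset V} (hZ : IsMinSplit Γ v Z) (hcard : 3 ≤ #Z) :
    IsBlock A (Z : Set V) := by
  rw [isBlock_iff_smul_eq_of_mem]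
  intro g a ha hga
  rw [mem_coe] at ha hga
  obtain ⟨hZv, -, hZq⟩ := hZ.splits
  have hgZv : g • Z ⊆ component Γ v :=
    smul_component_eq_of_mem hinv (hZv ha) (hZv hga) ▸ smul_finset_subset_smul_finset hZv
  have hinter_pos : 0 < #(g • Z ∩ Z) :=
    card_pos.2 ⟨g • a, mem_inter.2 ⟨smul_mem_smul_finset ha, hga⟩⟩
  rw [← coe_smul_finset, coe_inj]
  by_contra hne
  have hcard_smul := card_smul_finset g Z
  have hcut_smul := cutCard_smul hinv g Z
  have hinter_lt : #(g • Z ∩ Z) < #Z := by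
    refine card_lt_card (inter_subset_right.ssubset_of_ne fun h ↦ hne ?_)
    exact (eq_of_subset_of_card_le (inter_eq_right.1 h) hcard_smul.le).symm
  obtain hinter | hinter := Nat.lt_or_ge 1 #(g • Z ∩ Z)
  · have hunion := card_union_add_card_inter (g • Z) Z
    have splits_inter : SplitsComponent Γ v (g • Z ∩ Z) :=
      ⟨inter_subset_right.trans hZv, hinter, by omega⟩
    have splits_union : SplitsComponent Γ v (g • Z ∪ Z) := by
      have := hZ.two_mul_card_le
      exact ⟨union_subset hgZv hZv, by omega, by omega⟩
    have := cutCard_inter_add_cutCard_union_le Γ (g • Z) Z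
    have := hZ.cutCard_le _ splits_union
    have := hZ.card_le _ splits_inter (by omega)
    omega
  · have hsdiff := card_sdiff_add_card_inter (g • Z) Z
    have hsdiff' := card_sdiff_add_card_inter Z (g • Z)
    rw [inter_comm] at hsdiff'
    have splits_sdiff : SplitsComponent Γ v (g • Z \ Z) :=
      ⟨sdiff_subset.trans hgZv, by omega, by omega⟩
    have splits_sdiff' : SplitsComponent Γ v (Z \ g • Z) :=
      ⟨sdiff_subset.trans hZv, by omega, by omega⟩
    have := cutCard_sdiff_add_cutCard_sdiff_le Γ (g • Z) Z
    have := hZ.cutCard_le _ splits_sdiff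
    have := hZ.card_le _ splits_sdiff' (by omega)
    omega

lemma two_le_card_neighborFinset_sdiff_of_isBlock [IsPretransitive A V]
    (hfix : ∀ x y, Γ.Adj x y → ¬ stabilizer A x ≤ stabilizer A y)
    {Z : Finset V} (hZ : IsBlock A (Z : Set V)) (hcut : cutCard Γ Z ≠ 0) :
    ∀ z ∈ Z, 2 ≤ #(Γ.neighborFinset z \ Z) := by
  intro z hz
  have smul_notMem {g : A} {x y : V} (hx : x ∈ Z) (hgx : g • x ∈ Z) (hy : y ∉ Z) : g • y ∉ Z := by
    have := isBlock_iff_smul_eq_of_mem.1 hZ hx hgx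
    rw [← coe_smul_finset, coe_inj] at this
    rwa [← this, smul_mem_smul_finset_iff]
  obtain ⟨x, hx, y, hy, hxy⟩ := exists_adj_of_cutCard_ne_zero hcut
  obtain ⟨g, rfl⟩ := exists_smul_eq A x z
  have hadj := (hinv g x y).2 hxy
  obtain ⟨h, hfixed, hmoved⟩ := SetLike.not_le_iff_exists.1 (hfix _ _ hadj)
  rw [mem_stabilizer_iff] at hfixed hmoved
  refine one_lt_card.2 ⟨g • y, ?_, h • g • y, ?_, Ne.symm hmoved⟩
  · simpa using ⟨hadj, smul_notMem hx hz hy⟩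
  · rw [mem_sdiff, Γ.mem_neighborFinset]
    have := (hinv h _ _).2 hadj
    rw [hfixed] at this
    exact ⟨this, smul_notMem hz (hfixed.symm ▸ hz) (smul_notMem hx hz hy)⟩

lemma two_mul_degree_le_cutCard_add_two_of_splitsComponent [IsPretransitive A V]
    (hfix : ∀ x y, Γ.Adj x y → ¬ stabilizer A x ≤ stabilizer A y) {J : ℕ}
    (hreg : Γ.IsRegularOfDegree J) {v : V} {Z : Finset V} (hZ : SplitsComponent Γ v Z) :
    2 * J ≤ cutCard Γ Z + 2 := by
  obtain ⟨M, hM⟩ := exists_isMinSplit hZ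
  suffices 2 * J ≤ cutCard Γ M + 2 from this.trans (Nat.add_le_add_right (hM.cutCard_le Z hZ) 2)
  obtain ⟨hMv, hM2, hMq⟩ := hM.splits
  obtain hcard | hcard := hM2.eq_or_lt
  · have := card_mul_degree_add_one_le hreg M
    rw [← hcard] at this
    omega
  · have hcut : cutCard Γ M ≠ 0 := cutCard_ne_zero_of_subset_component
      (card_pos.1 (by omega)) (hMv.ssubset_of_ne fun h ↦ by rw [h] at hMq; omega)
    exact two_mul_degree_le_cutCard_add_two_of_two_le_card_neighborFinset_sdiff hreg hM2
      (two_le_card_neighborFinset_sdiff_of_isBlock hinv hfix (hM.isBlock hinv hcard) hcut)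

section Transitive

variable [IsPretransitive A V] (hfix : ∀ x y, Γ.Adj x y → ¬ stabilizer A x ≤ stabilizer A y)
  {J : ℕ} (hreg : Γ.IsRegularOfDegree J)
include hfix hreg

lemma degree_le_cutCard_of_ssubset_component (hJ : 2 ≤ J) {v : V} {Z : Finset V}
    (hZ : Z.Nonempty) (hZv : Z ⊂ component Γ v) : J ≤ cutCard Γ Z := by
  by_cases hsplit : SplitsComponent Γ v Z
  · have := two_mul_degree_le_cutCard_add_two_of_splitsComponent hinv hfix hreg hsplit
    omega
  have cutCard_of_card_eq_one {Y : Finset V} (hY : #Y = 1) : cutCard Γ Y = J := by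
    obtain ⟨x, rfl⟩ := card_eq_one.1 hY
    rw [cutCard_singleton, hreg x]
  have hcard := card_sdiff_add_card_eq_card hZv.1
  have hlt := card_lt_card hZv
  have hpos := card_pos.2 hZ
  obtain hone | hone : #Z = 1 ∨ #(component Γ v \ Z) = 1 := by
    by_contra! hne
    exact hsplit ⟨hZv.1, by omega, by omega⟩
  · exact (cutCard_of_card_eq_one hone).ge
  · rw [← cutCard_component_sdiff hZv.1, cutCard_of_card_eq_one hone]

lemma exists_forall_inter_component_eq_empty_or_subset [Nonempty V] (hJ : 2 ≤ J) {W : Finset V}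
    (hcut : cutCard Γ W < 2 * J) :
    ∃ v, ∀ w, component Γ w ≠ component Γ v →
      W ∩ component Γ w = ∅ ∨ component Γ w ⊆ W := by
  by_contra! hpartial
  have degree_le {x : V} (hx : (W ∩ component Γ x).Nonempty ∧ ¬ component Γ x ⊆ W) :
      J ≤ cutCard Γ (W ∩ component Γ x) :=
    degree_le_cutCard_of_ssubset_component hinv hfix hreg hJ hx.1
      (inter_subset_right.ssubset_of_ne fun h ↦ hx.2 (inter_eq_right.1 h))
  obtain ⟨u, -, hu⟩ := hpartial (Classical.arbitrary V)
  obtain ⟨w, hwu, hw⟩ := hpartial u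
  have pair_le : ∑ C ∈ {component Γ u, component Γ w}, cutCard Γ (W ∩ C) ≤ cutCard Γ W := by
    rw [← sum_cutCard_inter_component W]
    exact sum_le_sum_of_subset (by simp [insert_subset_iff])
  rw [sum_pair hwu.symm] at pair_le
  linarith [degree_le hu, degree_le hw]

theorem two_mul_degree_le_cutCard_add_two {c : ℕ} (hV : Fintype.card V = 2 * c + 1) (hJ : 3 ≤ J)
    {W : Finset V} (hW : #W = c) : 2 * J ≤ cutCard Γ W + 2 := by
  by_contra! hcut
  have : Nonempty V := Fintype.card_pos_iff.1 (by omega)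
  obtain ⟨v, hv⟩ := exists_forall_inter_component_eq_empty_or_subset hinv hfix hreg
    (by omega) (by omega : cutCard Γ W < 2 * J)
  have mem_components : component Γ v ∈ univ.image (component Γ) :=
    mem_image_of_mem _ (mem_univ v)
  have hq : J < #(component Γ v) := hreg v ▸ degree_lt_card_component v
  have hsplit : ¬ SplitsComponent Γ v (W ∩ component Γ v) := fun h ↦ by
    have := two_mul_degree_le_cutCard_add_two_of_splitsComponent hinv hfix hreg h
    have : cutCard Γ (W ∩ component Γ v) ≤ cutCard Γ W := by
      rw [← sum_cutCard_inter_component W]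
      exact single_le_sum (f := fun C ↦ cutCard Γ (W ∩ C)) (fun _ _ ↦ Nat.zero_le _)
        mem_components
    omega
  obtain ⟨l, hl⟩ : #(component Γ v) ∣
      ∑ C ∈ (univ.image (component Γ)).erase (component Γ v), #(W ∩ C) := by
    refine dvd_sum fun C hC ↦ ?_
    obtain ⟨hCv, hC⟩ := mem_erase.1 hC
    obtain ⟨w, -, rfl⟩ := mem_image.1 hC
    obtain h | h := hv w hCv
    · simp [h]
    · rw [inter_eq_right.2 h, card_component_eq hinv v w]
  have hc := sum_card_inter_component (Γ := Γ) W
  rw [← add_sum_erase _ _ mem_components, hl, hW] at hc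
  have hle : #(W ∩ component Γ v) ≤ #(component Γ v) := card_le_card inter_subset_right
  have htrivial : #(W ∩ component Γ v) ≤ 1 ∨ #(component Γ v) ≤ #(W ∩ component Γ v) + 1 := by
    by_contra! h
    exact hsplit ⟨inter_subset_right, by omega, by omega⟩
  refine not_dvd_two_mul_add_one (by omega) hle htrivial ?_
  have hdvd := card_component_dvd_card hinv v
  rw [hV, ← hc, show ∀ w q, 2 * (w + q * l) + 1 = 2 * w + 1 + q * (2 * l) by intros; ring] at hdvd
  exact (Nat.dvd_add_left (dvd_mul_right _ _)).1 hdvd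

end Transitive

end Action

end Cuts

section Counting

open Finset MulAction

variable (A : Type*) [Group A] [Fintype A] {V : Type*} [DecidableEq V] [MulAction A V]

/-- The elements `g` for which the translate `g • T` meets `M`. -/
def hitSet (M T : Finset V) : Finset A := {g | ∃ P ∈ T, g • P ∈ M}

/-- The number of `g` whose translate `g⁻¹ • M` contains `Q` but not `P`. -/
def sepCard (M : Finset V) (P Q : V) : ℕ := #{g : A | g • P ∉ M ∧ g • Q ∈ M}

variable {A}

@[simp] lemma mem_hitSet {M T : Finset V} {g : A} : g ∈ hitSet A M T ↔ ∃ P ∈ T, g • P ∈ M := by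
  simp [hitSet]

lemma sepCard_smul_smul (M : Finset V) (k : A) (P Q : V) :
    sepCard A M (k • P) (k • Q) = sepCard A M P Q :=
  card_equiv (Equiv.mulRight k) (by simp [mul_smul])

omit [Fintype A] [DecidableEq V] [MulAction A V] in
lemma card_subgroup_dvd_card {B : Subgroup A} {T : Finset A}
    (hT : ∀ g ∈ T, ∀ b ∈ B, g * b ∈ T) : Nat.card B ∣ #T := by
  have preimage_image :
      ((↑) : A → A ⧸ B) ⁻¹' (((↑) : A → A ⧸ B) '' (T : Set A)) = (T : Set A) := by
    refine Set.Subset.antisymm ?_ (Set.subset_preimage_image _ _)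
    rintro g ⟨t, ht, htg⟩
    simpa using hT t ht (t⁻¹ * g) (QuotientGroup.eq.1 htg)
  have card_preimage := QuotientGroup.card_preimage_mk B (((↑) : A → A ⧸ B) '' (T : Set A))
  rw [preimage_image] at card_preimage
  exact ⟨_, by simpa using card_preimage⟩

lemma card_stabilizer_dvd_sepCard (M : Finset V) {P Q : V}
    (hPQ : stabilizer A P ≤ stabilizer A Q) : Nat.card (stabilizer A P) ∣ sepCard A M P Q := by
  refine card_subgroup_dvd_card fun g hg b hb ↦ ?_
  have hbQ := mem_stabilizer_iff.1 (hPQ hb)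
  simpa [mul_smul, mem_stabilizer_iff.1 hb, hbQ] using hg

lemma card_stabilizer_dvd_card_hitSet (M : Finset V) {T : Finset V} (hT : IsBlock A (T : Set V))
    {P : V} (hP : P ∈ T) : Nat.card (stabilizer A P) ∣ #(hitSet A M T) := by
  refine card_subgroup_dvd_card fun g hg b hb ↦ ?_
  obtain ⟨Q, hQ, hgQ⟩ := mem_hitSet.1 hg
  have hbT : b • T = T := by
    rw [← coe_inj, coe_smul_finset]
    exact hT.stabilizer_le hP hb
  refine mem_hitSet.2 ⟨b⁻¹ • Q, ?_, by simpa [mul_smul] using hgQ⟩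
  rwa [inv_smul_mem_iff, hbT]

section Transitive

variable [IsPretransitive A V] (o : V)

omit [Fintype A] [DecidableEq V] in
variable (A) in
lemma card_stabilizer_eq (P : V) : Nat.card (stabilizer A P) = Nat.card (stabilizer A o) := by
  obtain ⟨g, rfl⟩ := exists_smul_eq A o P
  exact Nat.card_congr (stabilizerEquivStabilizer rfl).toEquiv.symm

lemma card_filter_smul_eq (P Q : V) : #{g : A | g • P = Q} = Nat.card (stabilizer A o) := by
  obtain ⟨k, rfl⟩ := exists_smul_eq A P Q
  rw [← card_stabilizer_eq A o P, Nat.subtype_card {b : A | b • P = P} (by simp)]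
  exact card_equiv (Equiv.mulLeft k⁻¹) (by simp [mul_smul, inv_smul_eq_iff])

lemma card_filter_smul_mem (P : V) (T : Finset V) :
    #{g : A | g • P ∈ T} = Nat.card (stabilizer A o) * #T := by
  have maps_to (g : A) (hg : g ∈ ({g | g • P ∈ T} : Finset A)) : g • P ∈ T := (mem_filter.1 hg).2
  rw [card_eq_sum_card_fiberwise maps_to, mul_comm, ← smul_eq_mul]
  refine sum_eq_card_nsmul fun Q hQ ↦ ?_
  rw [← card_filter_smul_eq o P Q, filter_filter]
  exact congrArg card (filter_congr fun g _ ↦ and_iff_right_of_imp fun h ↦ h ▸ hQ)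

omit [DecidableEq V] in
variable (A) in
lemma card_mul_card_stabilizer [Fintype V] :
    Fintype.card V * Nat.card (stabilizer A o) = Fintype.card A := by
  rw [← Nat.card_eq_fintype_card, ← Nat.card_eq_fintype_card,
    ← index_stabilizer_of_transitive A o, mul_comm, Subgroup.card_mul_index]

omit [DecidableEq V] in
lemma sum_comp_smul [Fintype V] (P : V) (φ : V → ℕ) :
    ∑ g : A, φ (g • P) = Nat.card (stabilizer A o) * ∑ Q, φ Q := by
  classical
  rw [← sum_fiberwise univ (fun g : A ↦ g • P), mul_sum]
  refine sum_congr rfl fun Q _ ↦ ?_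
  rw [sum_congr rfl fun g hg ↦ congrArg φ (mem_filter.1 hg).2, sum_const, smul_eq_mul,
    card_filter_smul_eq o]

lemma card_hitSet_pair (M : Finset V) (P Q : V) :
    #(hitSet A M {P, Q}) = Nat.card (stabilizer A o) * #M + sepCard A M P Q := by
  classical
  rw [← card_filter_smul_mem o P, sepCard, ← card_union_of_disjoint
    (disjoint_filter.2 fun g _ h h' ↦ h'.1 h)]
  congr 1
  ext g
  simp only [mem_hitSet, mem_insert, mem_singleton, exists_eq_or_imp, exists_eq_left,
    mem_union, mem_filter_univ]
  tauto

lemma sepCard_comm (M : Finset V) (P Q : V) : sepCard A M P Q = sepCard A M Q P := by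
  have := card_hitSet_pair (A := A) P M P Q
  rw [pair_comm, card_hitSet_pair P] at this
  omega

lemma sum_sepCard_neighborFinset [Fintype V] (Γ : SimpleGraph V) [DecidableRel Γ.Adj]
    (hinv : ∀ (g : A) (x y : V), Γ.Adj (g • x) (g • y) ↔ Γ.Adj x y) (M : Finset V) :
    ∑ Q ∈ Γ.neighborFinset o, sepCard A M o Q =
      Nat.card (stabilizer A o) * cutCard Γ Mᶜ := by
  calc ∑ Q ∈ Γ.neighborFinset o, sepCard A M o Q
      = ∑ g : A, #{Q ∈ Γ.neighborFinset o | g • o ∉ M ∧ g • Q ∈ M} :=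
        (sum_card_bipartiteAbove_eq_sum_card_bipartiteBelow
          fun (g : A) Q ↦ g • o ∉ M ∧ g • Q ∈ M).symm
    _ = ∑ g : A, if g • o ∈ Mᶜ then #(Γ.neighborFinset (g • o) \ Mᶜ) else 0 := by
        refine sum_congr rfl fun g _ ↦ ?_
        split_ifs with hg
        · rw [neighborFinset_smul hinv, ← card_smul_finset g {Q ∈ Γ.neighborFinset o | _}]
          congr 1
          ext x
          rw [mem_sdiff, ← inv_smul_mem_iff, ← inv_smul_mem_iff, mem_filter, smul_inv_smul]
          simp [mem_compl.1 hg]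
        · simp [notMem_compl.1 hg]
    _ = Nat.card (stabilizer A o) * cutCard Γ Mᶜ := by
        rw [sum_comp_smul o o fun x ↦ if x ∈ Mᶜ then #(Γ.neighborFinset x \ Mᶜ) else 0,
          cutCard_eq_sum_card_neighborFinset_sdiff, sum_ite_mem, univ_inter]

/-- The graph joining two distinct points when their separation number satisfies `p`. -/
def sepGraph (A : Type*) [Group A] [Fintype A] {V : Type*} [DecidableEq V] [MulAction A V]
    [IsPretransitive A V] (M : Finset V) (p : ℕ → Prop) : SimpleGraph V where
  Adj P Q := P ≠ Q ∧ p (sepCard A M P Q)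
  symm := ⟨fun P Q h ↦ ⟨h.1.symm, sepCard_comm (A := A) M P Q ▸ h.2⟩⟩

instance (M : Finset V) (p : ℕ → Prop) [DecidablePred p] :
    DecidableRel (sepGraph A M p).Adj :=
  fun P Q ↦ inferInstanceAs (Decidable (P ≠ Q ∧ p (sepCard A M P Q)))

lemma sepGraph_adj_smul_smul (M : Finset V) (p : ℕ → Prop) (g : A) (P Q : V) :
    (sepGraph A M p).Adj (g • P) (g • Q) ↔ (sepGraph A M p).Adj P Q :=
  and_congr (MulAction.injective g).ne_iff (by rw [sepCard_smul_smul])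

end Transitive

end Counting

section Exceptional

open Finset MulAction

lemma two_mul_sum_le_card_mul {ι : Type*} {U : Finset ι} {f : ι → ℕ} {b : ℕ} (hU : 2 ≤ #U)
    (hf : ∀ y ∈ U, ∀ z ∈ U, y ≠ z → f y + f z ≤ b) : 2 * ∑ y ∈ U, f y ≤ #U * b := by
  classical
  obtain ⟨k, hk⟩ := Nat.exists_eq_add_of_le hU
  have hpoint (y : ι) (hy : y ∈ U) : k * f y + ∑ z ∈ U, f z ≤ (k + 1) * b := by
    have hcard : #(U.erase y) = k + 1 := by rw [card_erase_of_mem hy]; omega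
    have := sum_le_card_nsmul (U.erase y) (fun z ↦ f y + f z) b fun z hz ↦
      hf y hy z (mem_of_mem_erase hz) (ne_of_mem_erase hz).symm
    rw [sum_add_distrib, sum_const, smul_eq_mul, smul_eq_mul, hcard] at this
    rw [← add_sum_erase U f hy]
    linarith
  have hsum := sum_le_card_nsmul U _ _ hpoint
  rw [sum_add_distrib, ← mul_sum, sum_const, smul_eq_mul, smul_eq_mul] at hsum
  refine Nat.le_of_mul_le_mul_left (c := k + 1) ?_ k.succ_pos
  rw [hk] at hsum ⊢
  linarith

variable [Fintype G] {V : Type*} [Fintype V] [DecidableEq V] [MulAction G V]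

/-- The configuration left when an atom of `S` is not a subgroup: `V` is the coset space of the
subgroup fragment of `S⁻¹`, of order `β`, with base point `o`; `M` is the set of cosets met by `S`;
and the last two fields say that the fragments `X` of `S⁻¹` satisfy `|X S⁻¹| - |X| = c β` and have
at most `β` elements. They are stated for `S / X = (X S⁻¹)⁻¹`. -/
structure IsExceptional (S : Finset G) (o : V) (M : Finset V) (β c s : ℕ) : Prop where
  card_stabilizer : Nat.card (stabilizer G o) = β
  card_space : Fintype.card V = 2 * c + 1
  image_smul : S.image (· • o) = M
  card_image : #M = c + 1
  card_eq : #S = c * β + s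
  two_le_excess : 2 ≤ s
  two_mul_excess_le : 2 * s ≤ β
  two_le_c : 2 ≤ c
  card_inv_mul_le : #(S⁻¹ * S) + 2 ≤ 2 * #S
  le_card_div : ∀ X : Finset G, X.Nonempty → S / X ≠ univ → #X + c * β ≤ #(S / X)
  card_le_of_card_div_eq : ∀ X : Finset G, X.Nonempty → S / X ≠ univ →
    #(S / X) = #X + c * β → #X ≤ β

omit [Fintype V] in
lemma div_filter_smul_mem (S : Finset G) (o : V) (T : Finset V) :
    S / ({x | x • o ∈ T} : Finset G) = hitSet G (S.image (· • o)) T := by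
  ext g
  simp only [mem_div, mem_hitSet, mem_filter_univ, mem_image]
  constructor
  · rintro ⟨t, ht, x, hx, rfl⟩
    exact ⟨x • o, hx, t, ht, by simp [div_eq_mul_inv, mul_smul]⟩
  · rintro ⟨P, hP, t, ht, htP⟩
    refine ⟨t, ht, g⁻¹ * t, ?_, by simp [div_eq_mul_inv]⟩
    rwa [mul_smul, htP, inv_smul_smul]

/-- The elements of `G` that are not of the form `s⁻¹ t` with `s, t ∈ S`. -/
def nonQuotients (S : Finset G) : Finset G := (S⁻¹ * S)ᶜ

omit [Fintype V] [DecidableEq V] [MulAction G V] in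
lemma inv_mul_notMem_nonQuotients {S : Finset G} {s t : G} (hs : s ∈ S) (ht : t ∈ S) :
    s⁻¹ * t ∉ nonQuotients S := by
  simpa [nonQuotients] using mul_mem_mul (inv_mem_inv hs) ht

lemma inv_mem_nonQuotients {S : Finset G} {x : G} (hx : x ∈ nonQuotients S) :
    x⁻¹ ∈ nonQuotients S := by
  rw [nonQuotients, mem_compl] at hx ⊢
  rwa [← mem_inv', mul_inv_rev, inv_inv]

lemma disjoint_op_smul_nonQuotients {S : Finset G} {x : G} (hx : x ∈ nonQuotients S) :
    Disjoint (MulOpposite.op x • S) S := by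
  refine disjoint_left.2 fun g hg ht ↦ ?_
  obtain ⟨t, hs, rfl⟩ := mem_smul_finset.1 hg
  exact inv_mul_notMem_nonQuotients hs ht (by simpa using hx)

lemma disjoint_div_nonQuotients (S : Finset G) : Disjoint (S / nonQuotients S) S := by
  refine disjoint_left.2 fun g hg hs ↦ ?_
  obtain ⟨t, ht, x, hx, rfl⟩ := mem_div.1 hg
  exact inv_mul_notMem_nonQuotients hs ht (by simpa [div_eq_mul_inv] using hx)

namespace IsExceptional

variable [IsPretransitive G V] {S : Finset G} {o : V} {M : Finset V} {β c s : ℕ}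
  (h : IsExceptional S o M β c s)
include h

lemma card_group : Fintype.card G = (2 * c + 1) * β := by
  rw [← card_mul_card_stabilizer G o, h.card_stabilizer, h.card_space]

lemma card_filter_smul_mem (P : V) (T : Finset V) : #{g : G | g • P ∈ T} = β * #T := by
  rw [_root_.card_filter_smul_mem o, h.card_stabilizer]

lemma lt_card_hitSet {T : Finset V} (hT : 2 ≤ #T) (hlt : #(hitSet G M T) < (2 * c + 1) * β) :
    (#T + c) * β < #(hitSet G M T) := by
  have hβ : 0 < β := by linarith [h.two_le_excess, h.two_mul_excess_le]
  have hdiv := div_filter_smul_mem S o T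
  rw [h.image_smul] at hdiv
  rw [← hdiv, ← h.card_group] at hlt
  have hcard := h.card_filter_smul_mem o T
  have hne : S / ({x | x • o ∈ T} : Finset G) ≠ univ := fun huniv ↦ by simp [huniv] at hlt
  have hnonempty : ({x | x • o ∈ T} : Finset G).Nonempty :=
    card_pos.1 (by rw [hcard]; positivity)
  have hle := h.le_card_div _ hnonempty hne
  have hmax := h.card_le_of_card_div_eq _ hnonempty hne
  rw [hcard] at hle hmax
  rw [← hdiv]
  refine lt_of_le_of_ne (by linarith) fun heq ↦ ?_
  nlinarith [hmax (by linarith)]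

lemma lt_sepCard {P Q : V} (hPQ : P ≠ Q) : β < sepCard G M P Q := by
  have hβ : 0 < β := by linarith [h.two_le_excess, h.two_mul_excess_le]
  have hpair := card_hitSet_pair (A := G) o M P Q
  rw [h.card_stabilizer, h.card_image] at hpair
  by_contra! hle
  have := h.lt_card_hitSet (T := {P, Q}) (card_pair hPQ).ge (by nlinarith [h.two_le_c])
  rw [card_pair hPQ] at this
  linarith

lemma not_stabilizer_le {P Q : V} (hPQ : P ≠ Q) (hsep : sepCard G M P Q < 2 * β) :
    ¬ stabilizer G P ≤ stabilizer G Q := by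
  intro hle
  have hdvd := card_stabilizer_dvd_sepCard M hle
  rw [card_stabilizer_eq G o, h.card_stabilizer] at hdvd
  obtain ⟨k, hk⟩ := hdvd
  have := h.lt_sepCard hPQ
  rw [hk] at this hsep
  have : 1 < k := lt_of_mul_lt_mul_left (by linarith) (Nat.zero_le β)
  have : k < 2 := lt_of_mul_lt_mul_left (by linarith) (Nat.zero_le β)
  omega

omit [IsPretransitive G V] in
lemma card_compl_image : #Mᶜ = c := by
  rw [card_compl, h.card_space, h.card_image]
  omega

omit [IsPretransitive G V] in
lemma odd_card_space : Odd (Fintype.card V) := ⟨c, h.card_space⟩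

lemma sum_sepCard_neighborFinset_sepGraph {p : ℕ → Prop} [DecidablePred p]
    (hp : ∀ m, p m → m < 2 * β) (hdeg : 0 < (sepGraph G M p).degree o) :
    4 ≤ (sepGraph G M p).degree o ∧
      ∑ Q ∈ (sepGraph G M p).neighborFinset o, sepCard G M o Q + 2 * β =
        2 * β * (sepGraph G M p).degree o := by
  set Γ := sepGraph G M p
  have hinv : ∀ (g : G) P Q, Γ.Adj (g • P) (g • Q) ↔ Γ.Adj P Q := sepGraph_adj_smul_smul M p
  have hreg := isRegularOfDegree_degree hinv o
  have hfix (P Q : V) (hPQ : Γ.Adj P Q) := h.not_stabilizer_le hPQ.1 (hp _ hPQ.2)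
  have hsum := sum_sepCard_neighborFinset o Γ hinv M
  rw [h.card_stabilizer] at hsum
  have hnonempty : (Γ.neighborFinset o).Nonempty := card_pos.1 hdeg
  have hgt : Γ.degree o * β < β * cutCard Γ Mᶜ := by
    rw [← hsum, ← Γ.card_neighborFinset_eq_degree, ← smul_eq_mul, ← sum_const]
    exact sum_lt_sum_of_nonempty hnonempty fun Q hQ ↦
      h.lt_sepCard ((Γ.mem_neighborFinset o Q).1 hQ).1
  have hlt : β * cutCard Γ Mᶜ < Γ.degree o * (2 * β) := by
    rw [← hsum, ← Γ.card_neighborFinset_eq_degree, ← smul_eq_mul, ← sum_const]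
    exact sum_lt_sum_of_nonempty hnonempty fun Q hQ ↦ hp _ ((Γ.mem_neighborFinset o Q).1 hQ).2
  have hJcut : Γ.degree o < cutCard Γ Mᶜ := by nlinarith
  have hcutJ : cutCard Γ Mᶜ < 2 * Γ.degree o := by nlinarith
  have hJeven := even_degree_of_odd_card hreg h.odd_card_space
  have hcutEven := even_cutCard hreg hJeven Mᶜ
  rw [Nat.even_iff] at hJeven hcutEven
  -- the even numbers `J < cut < 2 J` leave room only for `J ≥ 4` and `cut ≤ 2 J - 2`
  have hJ : 4 ≤ Γ.degree o := by omega
  have hgraph := two_mul_degree_le_cutCard_add_two hinv hfix hreg h.card_space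
    (by omega) h.card_compl_image
  have hcut : cutCard Γ Mᶜ + 2 = 2 * Γ.degree o := by omega
  exact ⟨hJ, by rw [hsum]; linear_combination β * hcut⟩

lemma sepCard_eq_sepCard_of_lt {Q R : V} (hQ : (sepGraph G M (· < 2 * β)).Adj o Q)
    (hR : (sepGraph G M (· < 2 * β)).Adj o R) : sepCard G M o R = sepCard G M o Q := by
  set near := sepGraph G M (· < 2 * β)
  set level := sepGraph G M (· = sepCard G M o Q)
  have hsub : level.neighborFinset o ⊆ near.neighborFinset o := fun P hP ↦ by
    rw [SimpleGraph.mem_neighborFinset] at hP ⊢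
    exact ⟨hP.1, hP.2 ▸ hQ.2⟩
  have hnear_deg : 0 < near.degree o := card_pos.2 ⟨Q, (near.mem_neighborFinset o Q).2 hQ⟩
  have hlevel_deg : 0 < level.degree o :=
    card_pos.2 ⟨Q, (level.mem_neighborFinset o Q).2 ⟨hQ.1, rfl⟩⟩
  have hsum_near : ∑ P ∈ near.neighborFinset o, sepCard G M o P + 2 * β = 2 * β * near.degree o :=
    (h.sum_sepCard_neighborFinset_sepGraph (fun _ ↦ id) hnear_deg).2
  have hsum_level :
      ∑ P ∈ level.neighborFinset o, sepCard G M o P + 2 * β = 2 * β * level.degree o :=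
    (h.sum_sepCard_neighborFinset_sepGraph (fun _ hm ↦ hm.trans_lt hQ.2) hlevel_deg).2
  suffices heq : level.neighborFinset o = near.neighborFinset o by
    rw [← near.mem_neighborFinset, ← heq, level.mem_neighborFinset] at hR
    exact hR.2
  by_contra hne
  have hdiff := sdiff_nonempty.2 fun hle ↦ hne (hsub.antisymm hle)
  have hlt : ∑ P ∈ near.neighborFinset o \ level.neighborFinset o, sepCard G M o P <
      #(near.neighborFinset o \ level.neighborFinset o) * (2 * β) :=
    (sum_lt_sum_of_nonempty hdiff fun P hP ↦
      ((near.mem_neighborFinset o P).1 (mem_sdiff.1 hP).1).2).trans_eq (by simp)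
  have hsum := sum_sdiff hsub (f := sepCard G M o)
  have hcard := card_sdiff_add_card_eq_card hsub
  rw [near.card_neighborFinset_eq_degree, level.card_neighborFinset_eq_degree] at hcard
  nlinarith

lemma exists_sepCard_add_eq (hdeg : 0 < (sepGraph G M (· < 2 * β)).degree o) :
    ∃ e, (sepGraph G M (· < 2 * β)).degree o * e = 2 * β ∧
      ∀ P Q, (sepGraph G M (· < 2 * β)).Adj P Q → sepCard G M P Q + e = 2 * β := by
  set near := sepGraph G M (· < 2 * β)
  have hsum : ∑ Q ∈ near.neighborFinset o, sepCard G M o Q + 2 * β = 2 * β * near.degree o :=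
    (h.sum_sepCard_neighborFinset_sepGraph (fun _ ↦ id) hdeg).2
  obtain ⟨R, hR⟩ := card_pos.1 hdeg
  rw [near.mem_neighborFinset] at hR
  refine ⟨2 * β - sepCard G M o R, ?_, fun P Q hPQ ↦ ?_⟩
  · rw [sum_congr rfl fun Q hQ ↦
      h.sepCard_eq_sepCard_of_lt hR ((near.mem_neighborFinset o Q).1 hQ),
      sum_const, near.card_neighborFinset_eq_degree, smul_eq_mul] at hsum
    exact Nat.mul_sub _ _ _ ▸ Nat.sub_eq_of_eq_add (by linarith)
  · obtain ⟨g, rfl⟩ := exists_smul_eq G o P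
    obtain ⟨Q, rfl⟩ := MulAction.surjective g Q
    rw [sepCard_smul_smul,
      h.sepCard_eq_sepCard_of_lt hR ((sepGraph_adj_smul_smul M _ g o Q).1 hPQ)]
    exact Nat.add_sub_cancel' hR.2.le

omit [IsPretransitive G V] in
lemma smul_mem {t : G} (ht : t ∈ S) : t • o ∈ M :=
  h.image_smul ▸ mem_image_of_mem (· • o) ht

lemma le_card_nonQuotients : β + 2 ≤ #(nonQuotients S) + 2 * s := by
  have := card_add_card_compl (S⁻¹ * S)
  have := h.card_inv_mul_le
  rw [h.card_eq] at this
  rw [h.card_group] at *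
  rw [nonQuotients]
  linarith

lemma smul_ne_of_mem_nonQuotients {x : G} (hx : x ∈ nonQuotients S) : x • o ≠ o := by
  intro hxo
  have hsub : MulOpposite.op x • S ∪ S ⊆ ({g | g • o ∈ M} : Finset G) := by
    refine union_subset (fun g hg ↦ ?_) fun t ht ↦ by simpa using h.smul_mem ht
    obtain ⟨t, ht, rfl⟩ := mem_smul_finset.1 hg
    simpa [mul_smul, hxo] using h.smul_mem ht
  have hle := card_le_card hsub
  rw [card_union_of_disjoint (disjoint_op_smul_nonQuotients hx), card_smul_finset,
    h.card_filter_smul_mem, h.card_image, h.card_eq] at hle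
  nlinarith [h.two_le_c, h.two_le_excess]

lemma card_div_nonQuotients_add_le : #(S / nonQuotients S) + s ≤ (c + 1) * β := by
  have := card_le_univ (S / nonQuotients S ∪ S)
  rw [card_union_of_disjoint (disjoint_div_nonQuotients S), h.card_group, h.card_eq] at this
  linarith

lemma card_filter_sdiff_add_le {y : V} (hy : y ∈ (nonQuotients S).image (· • o)) :
    #(({g | g • y ∈ M} : Finset G) \ (S / {x ∈ nonQuotients S | x • o = y})) +
      #{x ∈ nonQuotients S | x • o = y} ≤ β := by
  set Dy : Finset G := {x ∈ nonQuotients S | x • o = y}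
  have hnonempty : Dy.Nonempty := by
    obtain ⟨x, hx, hxy⟩ := mem_image.1 hy
    exact ⟨x, mem_filter.2 ⟨hx, hxy⟩⟩
  have hne : S / Dy ≠ univ := fun huniv ↦ by
    have hS : S.Nonempty := card_pos.1 (by have := h.card_eq; have := h.two_le_excess; omega)
    obtain ⟨t, ht⟩ := hS
    exact disjoint_left.1 (disjoint_div_nonQuotients S)
      (div_subset_div_left (filter_subset _ _) (huniv ▸ mem_univ t)) ht
  have hsub : S / Dy ⊆ ({g | g • y ∈ M} : Finset G) := fun g hg ↦ by
    obtain ⟨t, ht, x, hx, rfl⟩ := mem_div.1 hg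
    rw [mem_filter_univ, ← (mem_filter.1 hx).2, div_eq_mul_inv, mul_smul, inv_smul_smul]
    exact h.smul_mem ht
  have hcard := card_sdiff_add_card_eq_card hsub
  rw [h.card_filter_smul_mem, h.card_image] at hcard
  linarith [h.le_card_div Dy hnonempty hne]

lemma card_hitSet_add_le {T : Finset V} (hT : T ⊆ (nonQuotients S).image (· • o)) :
    #(hitSet G M T) + s + ∑ y ∈ T, #{x ∈ nonQuotients S | x • o = y} ≤ (c + 1 + #T) * β := by
  have hsub : hitSet G M T ⊆ S / nonQuotients S ∪
      T.biUnion fun y ↦ ({g | g • y ∈ M} : Finset G) \ (S / {x ∈ nonQuotients S | x • o = y}) := by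
    intro g hg
    obtain ⟨y, hy, hgy⟩ := mem_hitSet.1 hg
    by_cases hdiv : g ∈ S / {x ∈ nonQuotients S | x • o = y}
    · exact mem_union_left _ (div_subset_div_left (filter_subset _ _) hdiv)
    · exact mem_union_right _ (mem_biUnion.2 ⟨y, hy, mem_sdiff.2 ⟨by simpa using hgy, hdiv⟩⟩)
  have hhit := (card_le_card hsub).trans ((card_union_le _ _).trans
    (Nat.add_le_add_left card_biUnion_le _))
  have hsum := sum_le_card_nsmul T _ β fun y hy ↦ h.card_filter_sdiff_add_le (hT hy)
  rw [sum_add_distrib, smul_eq_mul] at hsum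
  linarith [h.card_div_nonQuotients_add_le]

omit [IsPretransitive G V] in
lemma card_filter_smul_eq_add_le {z : V} {y g : G} (hy : y ∈ nonQuotients S) (hyz : y⁻¹ • o = z)
    (hgo : g • o ∉ M) (hgz : g • z ∉ M) :
    #{f : G | f • o = o ∧ f • z = z} + 2 * #S ≤ Fintype.card G := by
  set F : Finset G := {f | f • o = o ∧ f • z = z}
  have hdisj : Disjoint (g • F) (MulOpposite.op y • S ∪ S) := by
    refine disjoint_left.2 fun k hk hkS ↦ ?_
    obtain ⟨f, hf, rfl⟩ := mem_smul_finset.1 hk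
    obtain ⟨hfo, hfz⟩ := mem_filter_univ f |>.1 hf
    rcases mem_union.1 hkS with hkS | hkS
    · obtain ⟨t, ht, htk⟩ := mem_smul_finset.1 hkS
      apply hgz
      rw [← hfz, ← mul_smul, ← smul_eq_mul, ← htk, ← hyz]
      simpa [mul_smul] using h.smul_mem ht
    · apply hgo
      rw [← hfo, ← mul_smul]
      exact h.smul_mem hkS
  have := card_le_univ (g • F ∪ (MulOpposite.op y • S ∪ S))
  rw [card_union_of_disjoint hdisj, card_union_of_disjoint (disjoint_op_smul_nonQuotients hy),
    card_smul_finset, card_smul_finset] at this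
  linarith

lemma hitSet_pair_eq_univ {z : V} (hz : (nonQuotients S).image (· • o) = {z}) :
    hitSet G M {o, z} = univ := by
  have hxz (x : G) (hx : x ∈ nonQuotients S) : x • o = z :=
    mem_singleton.1 (hz ▸ mem_image_of_mem (· • o) hx)
  have hxo (x : G) (hx : x ∈ nonQuotients S) : x • z = o := by
    rw [← hxz _ (inv_mem_nonQuotients hx), smul_inv_smul]
  obtain ⟨y, hy⟩ : (nonQuotients S).Nonempty := by
    rw [← image_nonempty (f := (· • o)), hz]
    exact singleton_nonempty z
  have hyinv := inv_mem_nonQuotients hy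
  have hcard : #(nonQuotients S) ≤ #{f : G | f • o = o ∧ f • z = z} := by
    refine card_le_card_of_injOn (· * y⁻¹) (fun x hx ↦ ?_) (mul_left_injective y⁻¹).injOn
    simp [mul_smul, hxz _ hyinv, hxo _ hyinv, hxo x hx, hxz x hx]
  refine eq_univ_iff_forall.2 fun g ↦ ?_
  by_contra hg
  have hmiss : g • o ∉ M ∧ g • z ∉ M := by simpa using hg
  have := h.card_filter_smul_eq_add_le hy (hxz _ hyinv) hmiss.1 hmiss.2
  rw [h.card_group, h.card_eq] at this
  linarith [h.le_card_nonQuotients]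

lemma hitSet_pair_eq_univ_iff {Q : V} : hitSet G M {o, Q} = univ ↔ sepCard G M o Q = c * β := by
  rw [← card_eq_iff_eq_univ, card_hitSet_pair o, h.card_stabilizer, h.card_image, h.card_group]
  constructor <;> intro <;> linarith

lemma eq_of_hitSet_pair_eq_univ {P Q : V} (hP : hitSet G M {o, P} = univ)
    (hQ : hitSet G M {o, Q} = univ) : P = Q := by
  by_contra hPQ
  have hle : sepCard G M P Q + sepCard G M Q o ≤ #{g : G | g • o ∈ M} := by
    rw [sepCard, sepCard, ← card_union_of_disjoint
      (disjoint_filter.2 fun g _ hg hg' ↦ hg'.1 hg.2)]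
    refine card_le_card fun g hg ↦ ?_
    have hgP : g • o ∈ M ∨ g • P ∈ M := by simpa using (hP ▸ mem_univ g : g ∈ hitSet G M {o, P})
    simp only [mem_union, mem_filter_univ] at hg ⊢
    tauto
  rw [h.card_filter_smul_mem, h.card_image] at hle
  rw [sepCard_comm M Q o, h.hitSet_pair_eq_univ_iff.1 hQ] at hle
  linarith [h.lt_sepCard hPQ]

lemma card_image_nonQuotients_ne_one : #((nonQuotients S).image (· • o)) ≠ 1 := by
  intro hcard
  obtain ⟨z, hz⟩ := card_eq_one.1 hcard
  have hoz := h.hitSet_pair_eq_univ hz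
  have hne : o ≠ z := by
    obtain ⟨x, hx, rfl⟩ := mem_image.1 (hz ▸ mem_singleton_self z)
    exact (h.smul_ne_of_mem_nonQuotients hx).symm
  set Γ := sepGraph G M (· = c * β)
  have hnbr : Γ.neighborFinset o = {z} := by
    ext Q
    rw [Γ.mem_neighborFinset, mem_singleton]
    refine ⟨fun hQ ↦ h.eq_of_hitSet_pair_eq_univ (h.hitSet_pair_eq_univ_iff.2 hQ.2) hoz, ?_⟩
    rintro rfl
    exact ⟨hne, h.hitSet_pair_eq_univ_iff.1 hoz⟩
  have heven := even_degree_of_odd_card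
    (isRegularOfDegree_degree (sepGraph_adj_smul_smul (A := G) M (· = c * β)) o) h.odd_card_space
  change Even (Γ.degree o) at heven
  rw [← Γ.card_neighborFinset_eq_degree, hnbr] at heven
  exact Nat.not_even_one heven

lemma sepCard_add_le {y z : V} (hy : y ∈ (nonQuotients S).image (· • o))
    (hz : z ∈ (nonQuotients S).image (· • o)) (hyz : y ≠ z) :
    sepCard G M y z + s + (#{x ∈ nonQuotients S | x • o = y} +
      #{x ∈ nonQuotients S | x • o = z}) ≤ 2 * β := by
  have := h.card_hitSet_add_le (T := {y, z}) (insert_subset hy (singleton_subset_iff.2 hz))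
  rw [sum_pair hyz, card_pair hyz, card_hitSet_pair o, h.card_stabilizer, h.card_image] at this
  linarith

lemma sepGraph_adj_of_mem_image {y z : V} (hy : y ∈ (nonQuotients S).image (· • o))
    (hz : z ∈ (nonQuotients S).image (· • o)) (hyz : y ≠ z) :
    (sepGraph G M (· < 2 * β)).Adj y z :=
  ⟨hyz, by linarith [h.sepCard_add_le hy hz hyz, h.two_le_excess]⟩

lemma degree_lt_card_image (hcard : 2 ≤ #((nonQuotients S).image (· • o))) :
    (sepGraph G M (· < 2 * β)).degree o < #((nonQuotients S).image (· • o)) := by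
  set U := (nonQuotients S).image (· • o)
  set near := sepGraph G M (· < 2 * β)
  have hdeg : 0 < near.degree o := by
    obtain ⟨y, hy, z, hz, hyz⟩ := one_lt_card.1 hcard
    have hreg := isRegularOfDegree_degree (sepGraph_adj_smul_smul (A := G) M (· < 2 * β)) o
    exact hreg y ▸ (near.degree_pos_iff_exists_adj y).2 ⟨z, h.sepGraph_adj_of_mem_image hy hz hyz⟩
  obtain ⟨e, hJe, hsep⟩ := h.exists_sepCard_add_eq hdeg
  have hJ : 4 ≤ near.degree o := (h.sum_sepCard_neighborFinset_sepGraph (fun _ ↦ id) hdeg).1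
  have hfiber : 2 * #(nonQuotients S) ≤ #U * (e - s) := by
    rw [card_eq_sum_card_image (· • o) (nonQuotients S)]
    refine two_mul_sum_le_card_mul hcard fun y hy z hz hyz ↦ ?_
    have := h.sepCard_add_le hy hz hyz
    have := hsep y z (h.sepGraph_adj_of_mem_image hy hz hyz)
    omega
  rw [Nat.mul_sub] at hfiber
  have hD := h.le_card_nonQuotients
  have hβ := h.two_mul_excess_le
  by_contra! hle
  have hUe : #U * e ≤ 2 * β := hJe ▸ Nat.mul_le_mul_right e hle
  have he : 4 * e ≤ 2 * β := hJe ▸ Nat.mul_le_mul_right e hJ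
  obtain hU | hU := le_or_gt 4 #U
  · have := Nat.mul_le_mul_right s hU
    omega
  · interval_cases #U <;> omega

lemma insert_neighborFinset_eq_image (hcard : 2 ≤ #((nonQuotients S).image (· • o))) {y : V}
    (hy : y ∈ (nonQuotients S).image (· • o)) :
    insert y ((sepGraph G M (· < 2 * β)).neighborFinset y) = (nonQuotients S).image (· • o) := by
  set U := (nonQuotients S).image (· • o)
  set near := sepGraph G M (· < 2 * β)
  refine (eq_of_subset_of_card_le (fun z hz ↦ ?_) ?_).symm
  · rw [mem_insert, near.mem_neighborFinset, or_iff_not_imp_left]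
    exact fun hzy ↦ h.sepGraph_adj_of_mem_image hy hz (Ne.symm hzy)
  · have hreg := isRegularOfDegree_degree (sepGraph_adj_smul_smul (A := G) M (· < 2 * β)) o
    exact (card_insert_le _ _).trans (near.card_neighborFinset_eq_degree y ▸ hreg y ▸
      h.degree_lt_card_image hcard)

lemma isBlock_image (hcard : 2 ≤ #((nonQuotients S).image (· • o))) :
    IsBlock G ((nonQuotients S).image (· • o) : Set V) := by
  refine isBlock_iff_smul_eq_of_mem.2 fun g y hy hgy ↦ ?_
  rw [← coe_smul_finset, coe_inj, ← h.insert_neighborFinset_eq_image hcard hy, smul_finset_insert,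
    ← neighborFinset_smul (sepGraph_adj_smul_smul M _), h.insert_neighborFinset_eq_image hcard hgy,
    h.insert_neighborFinset_eq_image hcard hy]

lemma card_image_nonQuotients_lt_two : #((nonQuotients S).image (· • o)) < 2 := by
  by_contra! hcard
  have hblock := h.isBlock_image hcard
  have hsum := h.card_hitSet_add_le (T := (nonQuotients S).image (· • o)) Subset.rfl
  rw [← card_eq_sum_card_image] at hsum
  set U := (nonQuotients S).image (· • o)
  obtain ⟨y, hy⟩ : U.Nonempty := card_pos.1 (by omega)
  have hUlt : #U < Fintype.card V := by
    refine card_lt_univ_of_notMem (x := o) fun ho ↦ ?_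
    obtain ⟨x, hx, hxo⟩ := mem_image.1 ho
    exact h.smul_ne_of_mem_nonQuotients hx hxo
  have hUc : #U ≤ c := by
    obtain ⟨k, hk⟩ : #U ∣ Fintype.card V := by
      simpa using hblock.ncard_dvd_card ⟨y, hy⟩
    have hk2 : 2 ≤ k := by
      by_contra! hk2
      interval_cases k <;> omega
    have := Nat.mul_le_mul_left #U hk2
    rw [← hk, h.card_space] at this
    omega
  obtain ⟨k, hk⟩ := card_stabilizer_dvd_card_hitSet M hblock hy
  rw [card_stabilizer_eq G o, h.card_stabilizer] at hk
  have hlt : #(hitSet G M U) < (#U + c + 1) * β := by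
    linarith [h.two_le_excess]
  have hgt := h.lt_card_hitSet hcard (hlt.trans_le (Nat.mul_le_mul_right β (by omega)))
  rw [hk, mul_comm β] at hlt hgt
  have := lt_of_mul_lt_mul_right hlt (Nat.zero_le β)
  have := lt_of_mul_lt_mul_right hgt (Nat.zero_le β)
  omega

theorem elim : False := by
  have hlt := h.card_image_nonQuotients_lt_two
  have hne := h.card_image_nonQuotients_ne_one
  have hD : nonQuotients S = ∅ := by
    rw [← image_eq_empty (f := (· • o)), ← card_eq_zero]
    omega
  have := h.le_card_nonQuotients
  rw [hD, card_empty] at this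
  linarith [h.two_mul_excess_le]

end IsExceptional

end Exceptional

section Fragments

open Finset MulAction

variable {S X Y : Finset G}

lemma isFragment_iff (h1 : 1 ∈ S) : IsFragment S X ↔
    MemFam S X ∧ ∀ Y, MemFam S Y → #(X * S) + #Y ≤ #(Y * S) + #X := by
  refine and_congr_right fun _ ↦ forall₂_congr fun Y _ ↦ ?_
  have hX := card_le_card (subset_mul_left X h1)
  have hY := card_le_card (subset_mul_left Y h1)
  omega

lemma MemFam.mono (hY : MemFam S Y) (hX : X.Nonempty) (hXY : X ⊆ Y) : MemFam S X := by
  refine ⟨hX, fun huniv ↦ hY.2 (Set.univ_subset_iff.1 ?_)⟩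
  rw [← huniv]
  exact_mod_cast mul_subset_mul_right hXY

lemma card_inter_mul_add_card_union_mul_le (S X Y : Finset G) :
    #((X ∩ Y) * S) + #((X ∪ Y) * S) ≤ #(X * S) + #(Y * S) := by
  rw [union_mul, ← card_inter_add_card_union (X * S)]
  exact Nat.add_le_add_right (card_le_card inter_mul_subset) _

lemma IsFragment.smul (hX : IsFragment S X) (g : G) : IsFragment S (g • X) := by
  refine ⟨⟨hX.1.1.smul_finset, fun huniv ↦ hX.1.2 ?_⟩, fun Y hY ↦ ?_⟩
  · rw [smul_mul_assoc, coe_smul_finset] at huniv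
    exact Set.smul_set_eq_univ.1 huniv
  · rw [smul_mul_assoc, card_smul_finset, card_smul_finset]
    exact hX.2 Y hY

section Uncrossing

variable (h1 : 1 ∈ S) (hX : IsFragment S X) (hY : IsFragment S Y)
include h1 hX hY

lemma IsFragment.card_mul_add_card_eq : #(X * S) + #Y = #(Y * S) + #X :=
  (((isFragment_iff h1).1 hX).2 Y hY.1).antisymm (((isFragment_iff h1).1 hY).2 X hX.1)

variable (hinter : (X ∩ Y).Nonempty) (hunion : (((X ∪ Y) * S : Finset G) : Set G) ≠ Set.univ)
include hinter hunion

lemma IsFragment.inter : IsFragment S (X ∩ Y) := by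
  have hXmin := ((isFragment_iff h1).1 hX).2
  refine (isFragment_iff h1).2 ⟨hX.1.mono hinter inter_subset_left, fun Z hZ ↦ ?_⟩
  have hunion_min := hXmin (X ∪ Y) ⟨hX.1.1.mono subset_union_left, hunion⟩
  have := hX.card_mul_add_card_eq h1 hY
  have := card_inter_mul_add_card_union_mul_le S X Y
  have := card_inter_add_card_union X Y
  have := hXmin Z hZ
  omega

lemma IsFragment.union : IsFragment S (X ∪ Y) := by
  have hXmin := ((isFragment_iff h1).1 hX).2
  refine (isFragment_iff h1).2 ⟨⟨hX.1.1.mono subset_union_left, hunion⟩, fun Z hZ ↦ ?_⟩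
  have hinter_min := hXmin (X ∩ Y) (hX.1.mono hinter inter_subset_left)
  have := hX.card_mul_add_card_eq h1 hY
  have := card_inter_mul_add_card_union_mul_le S X Y
  have := card_inter_add_card_union X Y
  have := hXmin Z hZ
  omega

end Uncrossing

section Block

variable (h1 : 1 ∈ S) (hX : IsFragment S X)
  (hsmall : ∀ T : Finset G, (T : Set G) = Set.univ → #X + #(X * S) ≤ #T)
include h1 hX hsmall

lemma IsFragment.union_smul_mul_ne_univ {g : G} (hg : (X ∩ g • X).Nonempty) :
    (((X ∪ g • X) * S : Finset G) : Set G) ≠ Set.univ := by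
  intro huniv
  have hinter := ((isFragment_iff h1).1 hX).2 _ (hX.1.mono hg inter_subset_left)
  have hsubmod := card_inter_mul_add_card_union_mul_le S X (g • X)
  rw [smul_mul_assoc, card_smul_finset] at hsubmod
  have := hsmall _ huniv
  have := card_pos.2 hg
  omega

lemma IsFragment.isBlock_of_minimal (hmin : ∀ Y, IsFragment S Y → #X ≤ #Y) :
    IsBlock G (X : Set G) := by
  refine isBlock_iff_smul_eq_of_mem.2 fun g x hx hgx ↦ ?_
  have hg : (X ∩ g • X).Nonempty := ⟨g • x, mem_inter.2 ⟨hgx, smul_mem_smul_finset hx⟩⟩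
  have hcard := hmin _ (hX.inter h1 (hX.smul g) hg (hX.union_smul_mul_ne_univ h1 hsmall hg))
  have hsub : X ⊆ g • X := inter_eq_left.1 (eq_of_subset_of_card_le inter_subset_left hcard)
  exact_mod_cast (eq_of_subset_of_card_le hsub (card_smul_finset g X).le).symm

lemma IsFragment.isBlock_of_maximal (hmax : ∀ Y, IsFragment S Y → #Y ≤ #X) :
    IsBlock G (X : Set G) := by
  refine isBlock_iff_smul_eq_of_mem.2 fun g x hx hgx ↦ ?_
  have hg : (X ∩ g • X).Nonempty := ⟨g • x, mem_inter.2 ⟨hgx, smul_mem_smul_finset hx⟩⟩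
  have hcard := hmax _ (hX.union h1 (hX.smul g) hg (hX.union_smul_mul_ne_univ h1 hsmall hg))
  have hsub : g • X ⊆ X := union_eq_left.1 (eq_of_subset_of_card_le subset_union_left hcard).symm
  exact_mod_cast eq_of_subset_of_card_le hsub (card_smul_finset g X).ge

end Block

section Duality

variable [Fintype G]

lemma memFam_iff : MemFam S X ↔ X.Nonempty ∧ X * S ≠ univ := by
  rw [MemFam, ← coe_univ, Ne, coe_inj]

lemma compl_mul_mul_inv_subset (S X : Finset G) : (X * S)ᶜ * S⁻¹ ⊆ Xᶜ := by
  refine mul_subset_iff.2 fun y hy t ht ↦ mem_compl.2 fun hyt ↦ mem_compl.1 hy ?_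
  simpa using mul_mem_mul hyt (mem_inv'.1 ht)

lemma MemFam.compl_mul (hX : MemFam S X) : MemFam S⁻¹ (X * S)ᶜ := by
  rw [memFam_iff] at hX ⊢
  refine ⟨by simpa [nonempty_iff_ne_empty] using hX.2, fun huniv ↦ ?_⟩
  obtain ⟨x, hx⟩ := hX.1
  exact mem_compl.1 (compl_mul_mul_inv_subset S X (huniv ▸ mem_univ x)) hx

lemma IsFragment.compl_mul (h1 : 1 ∈ S) (hX : IsFragment S X) : IsFragment S⁻¹ (X * S)ᶜ := by
  refine (isFragment_iff (by simpa using h1)).2 ⟨hX.1.compl_mul, fun Y hY ↦ ?_⟩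
  have hmin := ((isFragment_iff h1).1 hX).2 _ (inv_inv S ▸ hY.compl_mul)
  have hXsub := card_le_card (compl_mul_mul_inv_subset S X)
  have hYsub := card_le_card (compl_mul_mul_inv_subset S⁻¹ Y)
  have := card_add_card_compl X
  have := card_add_card_compl Y
  have := card_add_card_compl (X * S)
  have := card_add_card_compl (Y * S⁻¹)
  rw [inv_inv] at hYsub
  omega

lemma IsFragment.compl_mul_mul_inv (h1 : 1 ∈ S) (hX : IsFragment S X) :
    (X * S)ᶜ * S⁻¹ = Xᶜ := by
  refine eq_of_subset_of_card_le (compl_mul_mul_inv_subset S X) ?_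
  set Z := ((X * S)ᶜ * S⁻¹)ᶜ
  have hZ : MemFam S Z := by simpa using hX.1.compl_mul.compl_mul
  have hmin := ((isFragment_iff h1).1 hX).2 Z hZ
  have hZS : Z * S ⊆ X * S := by simpa using compl_mul_mul_inv_subset S⁻¹ (X * S)ᶜ
  have := card_le_card hZS
  have := card_add_card_compl X
  have : #((X * S)ᶜ * S⁻¹) + #Z = Fintype.card G := card_add_card_compl _
  omega

lemma IsAtomOf.card_le_card_compl_mul (h1 : 1 ∈ S) (hX : IsAtomOf S X)
    (hY : IsFragment S⁻¹ Y) : #Y ≤ #(X * S)ᶜ := by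
  have h1inv : 1 ∈ S⁻¹ := by simpa using h1
  have hcard := hY.card_mul_add_card_eq h1inv (hX.1.compl_mul h1)
  have hle := hX.2 _ (inv_inv S ▸ hY.compl_mul h1inv)
  have := card_add_card_compl X
  have := card_add_card_compl (Y * S⁻¹)
  rw [hX.1.compl_mul_mul_inv h1] at hcard
  omega

end Duality

lemma IsFragment.card_mul_add_two_le (h1 : 1 ∈ S) (hX : IsFragment S X)
    (hcard : #(S⁻¹ * S) + 2 ≤ 2 * #S) (hne : ((S⁻¹ * S : Finset G) : Set G) ≠ Set.univ) :
    #(X * S) + 2 ≤ #X + #S := by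
  have := ((isFragment_iff h1).1 hX).2 S⁻¹ ⟨⟨1, by simpa using h1⟩, hne⟩
  rw [card_inv] at this
  omega

omit [DecidableEq G] in
lemma exists_subgroup_coe_eq {B : Set G} (hB : IsBlock G B) (h1 : 1 ∈ B) :
    ∃ K : Subgroup G, (K : Set G) = B := by
  refine ⟨stabilizer G B, Set.ext fun g ↦ ?_⟩
  rw [SetLike.mem_coe, mem_stabilizer_iff]
  refine ⟨fun hg ↦ ?_, fun hg ↦ hB.smul_eq_of_mem h1 (by simpa using hg)⟩
  rw [← hg]
  simpa using Set.smul_mem_smul_set (a := g) h1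

end Fragments

section Exclusion

open Finset MulAction

variable {S H B : Finset G}

lemma card_mul_inv_eq_card_div (X S : Finset G) : #(X * S⁻¹) = #(S / X) := by
  rw [← card_inv, mul_inv_rev, inv_inv, div_eq_mul_inv]

lemma card_div_stabilizer [Finite G] {V : Type*} [DecidableEq V] [MulAction G V]
    [IsPretransitive G V] {o : V} (hB : (stabilizer G o : Set G) = B) (S : Finset G) :
    #(S / B) = Nat.card (stabilizer G o) * #(S.image (· • o)) := by
  have := Fintype.ofFinite G
  have hfilter : B = ({x | x • o ∈ ({o} : Finset V)} : Finset G) := by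
    ext g
    simp [← mem_coe, ← hB]
  rw [hfilter, div_filter_smul_mem, ← card_filter_smul_mem o o]
  simp [hitSet]

variable [Fintype G]

lemma two_mul_card_le_of_inv_mul_ne_univ (hne : S⁻¹ * S ≠ univ) : 2 * #S ≤ Fintype.card G := by
  obtain ⟨x, hx⟩ : (nonQuotients S).Nonempty := by
    simpa [nonQuotients, nonempty_iff_ne_empty] using hne
  have := card_le_univ (MulOpposite.op x • S ∪ S)
  rw [card_union_of_disjoint (disjoint_op_smul_nonQuotients hx), card_smul_finset] at this
  omega

lemma IsAtomOf.exists_subgroup_isFragment_inv (h1 : 1 ∈ S) (hH : IsAtomOf S H)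
    (hlt : Fintype.card G < #H + #(H * S)) :
    ∃ (K : Subgroup G) (B : Finset G), (K : Set G) = B ∧ IsFragment S⁻¹ B ∧
      #B = #(H * S)ᶜ ∧ #(B * S⁻¹) = #Hᶜ := by
  have hfrag := hH.1.compl_mul h1
  obtain ⟨x, hx⟩ := hfrag.1.1
  have hB : #(x⁻¹ • (H * S)ᶜ) = #(H * S)ᶜ := card_smul_finset _ _
  have hBS : #(x⁻¹ • (H * S)ᶜ * S⁻¹) = #Hᶜ := by
    rw [smul_mul_assoc, card_smul_finset, hH.1.compl_mul_mul_inv h1]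
  have hblock : IsBlock G (↑(x⁻¹ • (H * S)ᶜ) : Set G) := by
    refine (hfrag.smul x⁻¹).isBlock_of_maximal (by simpa using h1) (fun T hT ↦ ?_)
      fun Y hY ↦ hB ▸ hH.card_le_card_compl_mul h1 hY
    rw [hB, hBS, coe_eq_univ.1 hT, card_univ]
    have := card_add_card_compl H
    have := card_add_card_compl (H * S)
    omega
  have h1B : 1 ∈ x⁻¹ • (H * S)ᶜ := mem_smul_finset.2 ⟨x, hx, inv_mul_cancel x⟩
  obtain ⟨K, hK⟩ := exists_subgroup_coe_eq hblock (mem_coe.2 h1B)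
  exact ⟨K, _, hK, hfrag.smul x⁻¹, hB, hBS⟩

lemma exists_isExceptional_parameters {v m β κ a k : ℕ} (hm : β * m = β + κ)
    (hv : v * β = β + κ + a) (ha : a ≤ κ) (hβ : β < a) (hk : κ + 2 ≤ k) (hkv : 2 * k ≤ v * β) :
    ∃ c s, v = 2 * c + 1 ∧ m = c + 1 ∧ κ = c * β ∧ k = c * β + s ∧ 2 ≤ s ∧ 2 * s ≤ β ∧ 2 ≤ c := by
  obtain ⟨c, rfl⟩ : ∃ c, m = c + 1 := Nat.exists_eq_succ_of_ne_zero (by rintro rfl; omega)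
  obtain rfl : κ = c * β := by linarith
  have hv_le : v ≤ 2 * c + 1 := by
    by_contra! hcon
    nlinarith
  have hv_gt : 2 * c < v := by
    by_contra! hcon
    nlinarith
  obtain rfl : v = 2 * c + 1 := by omega
  obtain ⟨s, rfl⟩ := Nat.exists_eq_add_of_le (show c * β ≤ k by omega)
  refine ⟨c, s, rfl, rfl, rfl, rfl, by omega, by linarith, ?_⟩
  by_contra! hcon
  interval_cases c <;> omega

lemma IsFragment.exists_isExceptional {V : Type*} [Fintype V] [DecidableEq V] [MulAction G V]
    [IsPretransitive G V] {o : V} (h1 : 1 ∈ S) (hB : IsFragment S⁻¹ B)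
    (hmax : ∀ Y, IsFragment S⁻¹ Y → #Y ≤ #B) (hstab : (stabilizer G o : Set G) = B)
    {a : ℕ} (ha : #(B * S⁻¹) + a = Fintype.card G) (hBa : #B < a) (hle : #B + a ≤ #(B * S⁻¹))
    (hcard : #(S⁻¹ * S) + 2 ≤ 2 * #S) (hne : S⁻¹ * S ≠ univ) (hS : #(B * S⁻¹) + 2 ≤ #B + #S) :
    ∃ c s, IsExceptional S o (S.image (· • o)) #B c s := by
  have hstab_card : Nat.card (stabilizer G o) = #B := by
    rw [← SetLike.coe_sort_coe, hstab, Nat.card_eq_card_toFinset, toFinset_coe]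
  have hBS := card_div_stabilizer hstab S
  have hV := card_mul_card_stabilizer G o
  rw [← card_mul_inv_eq_card_div] at hBS
  rw [hstab_card] at hBS hV
  obtain ⟨κ, hκ⟩ := Nat.exists_eq_add_of_le (show #B ≤ #(B * S⁻¹) by omega)
  obtain ⟨c, s, hcV, hcM, rfl, hcS, hs, hsβ, hc⟩ := exists_isExceptional_parameters
    (hBS.symm.trans hκ) (by omega) (by omega) hBa (by omega)
    (hV ▸ two_mul_card_le_of_inv_mul_ne_univ hne)
  have hmem {X : Finset G} (hX : X.Nonempty) (hX' : S / X ≠ univ) : MemFam S⁻¹ X := by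
    refine memFam_iff.2 ⟨hX, fun huniv ↦ hX' ?_⟩
    rw [← card_eq_iff_eq_univ, ← card_mul_inv_eq_card_div, huniv, card_univ]
  have hmin := (isFragment_iff (by simpa using h1)).1 hB
  refine ⟨c, s, hstab_card, hcV, rfl, hcM, hcS, hs, hsβ, hc, hcard, fun X hX hX' ↦ ?_,
    fun X hX hX' hXeq ↦ ?_⟩
  · have := hmin.2 X (hmem hX hX')
    rw [← card_mul_inv_eq_card_div]
    omega
  · refine hmax X ((isFragment_iff (by simpa using h1)).2 ⟨hmem hX hX', fun Y hY ↦ ?_⟩)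
    have := hmin.2 Y hY
    rw [← card_mul_inv_eq_card_div] at hXeq
    omega

theorem IsAtomOf.card_add_card_mul_le (h1 : 1 ∈ S) (hH : IsAtomOf S H)
    (hle : #H ≤ #((H * S) \ H)) (hcard : #(S⁻¹ * S) + 2 ≤ 2 * #S)
    (hne : S⁻¹ * S ≠ univ) : #H + #(H * S) ≤ Fintype.card G := by
  classical
  by_contra! hlt
  obtain ⟨K, B, hK, hB, hBcard, hBS⟩ := hH.exists_subgroup_isFragment_inv h1 hlt
  have hstab : (stabilizer G ((1 : G) : G ⧸ K) : Set G) = B := by rw [stabilizer_quotient, hK]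
  have := hH.1.card_mul_add_two_le h1 hcard (mt coe_eq_univ.1 hne)
  have := card_add_card_compl H
  have := card_add_card_compl (H * S)
  rw [card_sdiff_of_subset (subset_mul_left H h1)] at hle
  obtain ⟨c, s, hexc⟩ := hB.exists_isExceptional h1
    (fun Y hY ↦ hBcard ▸ hH.card_le_card_compl_mul h1 hY) hstab
    (show #(B * S⁻¹) + #H = Fintype.card G by omega) (by omega) (by omega) hcard hne (by omega)
  exact hexc.elim

end Exclusion

section Components

open Finset

variable {S H : Finset G} {K : Subgroup G} (hK : (K : Set G) = H)
include hK

lemma mem_mul_singleton_iff {g x : G} : g ∈ H * {x} ↔ g * x⁻¹ ∈ K := by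
  rw [← SetLike.mem_coe (p := K), hK, mem_coe, mul_singleton,
    ← inv_smul_mem_iff, ← MulOpposite.op_inv, op_smul_eq_mul]

lemma mul_singleton_eq_of_mem {x y : G} (hy : y ∈ H * {x}) : H * {y} = H * {x} := by
  rw [mem_mul_singleton_iff hK] at hy
  ext g
  rw [mem_mul_singleton_iff hK, mem_mul_singleton_iff hK, ← K.mul_mem_cancel_right hy,
    mul_assoc, inv_mul_cancel_left]

lemma disjoint_mul_singleton {x y : G} (hy : y ∉ H * {x}) : Disjoint (H * {x}) (H * {y}) := by
  refine disjoint_left.2 fun g hgx hgy ↦ hy ?_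
  rw [← mul_singleton_eq_of_mem hK hgx, mul_singleton_eq_of_mem hK hgy,
    mem_mul_singleton_iff hK, mul_inv_cancel]
  exact K.one_mem

lemma card_add_two_le_card_component_add_card_component (hHS : #(H * S) + 2 ≤ #H + #S) {x y : G}
    (hx : x ∈ S) (hy : y ∈ S) (hxy : y ∉ H * {x}) :
    #H + 2 ≤ #(S ∩ (H * {x})) + #(S ∩ (H * {y})) := by
  have h1H : 1 ∈ H := mem_coe.1 (hK ▸ K.one_mem)
  have hsub : S ∪ (H * {x} ∪ H * {y}) ⊆ H * S :=
    union_subset (subset_mul_right S h1H) (union_subset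
      (mul_subset_mul_left (singleton_subset_iff.2 hx))
      (mul_subset_mul_left (singleton_subset_iff.2 hy)))
  have := card_le_card hsub
  have := card_union_add_card_inter S (H * {x} ∪ H * {y})
  have hunion := card_union_of_disjoint (disjoint_mul_singleton hK hxy)
  rw [card_mul_singleton, card_mul_singleton] at hunion
  have := card_union_le (S ∩ (H * {x})) (S ∩ (H * {y}))
  rw [← inter_union_distrib_left] at this
  omega

lemma card_lt_card_component_add_card_component (hHS : #(H * S) + 2 ≤ #H + #S) {c x y : G}
    (hc : c ∈ S) (hcmin : ∀ x ∈ S, #(S ∩ (H * {c})) ≤ #(S ∩ (H * {x}))) (hx : x ∈ S) (hy : y ∈ S)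
    (hxy : ¬(x ∈ H * {c} ∧ y ∈ H * {c})) :
    #H < #(S ∩ (H * {x})) + #(S ∩ (H * {y})) := by
  by_cases hyx : y ∈ H * {x}
  · rw [mul_singleton_eq_of_mem hK hyx]
    have hxc : x ∉ H * {c} := fun hxc ↦ hxy ⟨hxc, mul_singleton_eq_of_mem hK hxc ▸ hyx⟩
    have := card_add_two_le_card_component_add_card_component hK hHS hc hx hxc
    have := hcmin x hx
    omega
  · have := card_add_two_le_card_component_add_card_component hK hHS hx hy hyx
    omega

lemma inv_mul_mul_subset_inv_mul {x y : G}
    (hlt : #H < #(S ∩ (H * {x})) + #(S ∩ (H * {y}))) : {x⁻¹} * H * {y} ⊆ S⁻¹ * S := by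
  intro g hg
  obtain ⟨h, hh, rfl⟩ : ∃ h ∈ H, x⁻¹ * h * y = g := by
    simpa [mem_mul] using hg
  have hsub : MulOpposite.op (x⁻¹ * h * y) • (S ∩ (H * {x})) ⊆ H * {y} := by
    intro t ht
    obtain ⟨s, hs, rfl⟩ := mem_smul_finset.1 ht
    rw [mem_inter, mem_mul_singleton_iff hK] at hs
    rw [mem_mul_singleton_iff hK]
    have hhK : h ∈ K := by rw [← SetLike.mem_coe, hK]; exact hh
    simpa [mul_assoc] using K.mul_mem hs.2 hhK
  obtain ⟨t, ht⟩ := inter_nonempty_of_card_lt_card_add_card hsub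
    (inter_subset_right (s₁ := S)) (by simpa using hlt)
  obtain ⟨hts, htS⟩ := mem_inter.1 ht
  obtain ⟨s, hs, rfl⟩ := mem_smul_finset.1 hts
  refine mem_mul.2 ⟨s⁻¹, inv_mem_inv (mem_inter.1 hs).1, _, (mem_inter.1 htS).1, by simp⟩

end Components

theorem stmt_10_general {G : Type*} [Group G] [DecidableEq G] (S : Finset G)
    (h1 : (1 : G) ∈ S) (hfaith : IsFaithful S)
    (hcard : (S⁻¹ * S).card ≤ 2 * S.card - 2)
    (hne : (↑(S⁻¹ * S) : Set G) ≠ Set.univ)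
    (H : Finset G) (hH : IsAtomOf S H) (h1H : (1 : G) ∈ H)
    (C : Finset G) (hC : ∃ c ∈ S, C = S ∩ (H * {c}))
    (hCmin : ∀ x ∈ S, C.card ≤ (S ∩ (H * {x})).card) :
    ∀ x ∈ S, ∀ y ∈ S, ¬(x ∈ C ∧ y ∈ C) →
      ({x⁻¹} * H * {y} : Finset G) ⊆ S⁻¹ * S := by
  obtain ⟨c, hc, rfl⟩ := hC
  intro x hx y hy hxy
  have hcard' : (S⁻¹ * S).card + 2 ≤ 2 * S.card := by
    have := Finset.card_pos.2 ⟨1, h1⟩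
    omega
  have hsmall (T : Finset G) (hT : (T : Set G) = Set.univ) : H.card + (H * S).card ≤ T.card := by
    let _ : Fintype G := ⟨T, fun g ↦ Finset.mem_coe.1 (hT ▸ Set.mem_univ g)⟩
    exact hH.card_add_card_mul_le h1 (hfaith H hH) hcard' (mt Finset.coe_eq_univ.2 hne)
  obtain ⟨K, hK⟩ := exists_subgroup_coe_eq (hH.1.isBlock_of_minimal h1 hsmall hH.2)
    (Finset.mem_coe.2 h1H)
  refine inv_mul_mul_subset_inv_mul hK (card_lt_card_component_add_card_component hK
    (hH.1.card_mul_add_two_le h1 hcard' hne) hc hCmin hx hy fun hxyc ↦ hxy ?_)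
  exact ⟨Finset.mem_inter.2 ⟨hx, hxyc.1⟩, Finset.mem_inter.2 ⟨hy, hxyc.2⟩⟩

/-- Let `G` be a group and `S` a finite faithful generating subset of `G` with
`1 ∈ S`, `|S⁻¹S| ≤ 2|S| − 2` and `S⁻¹S ≠ G`. Let `H` be a basic atom of `S`
and `C` an `H`-right-component of `S` of smallest cardinality. Then for all
`x, y ∈ S` with `(x, y) ∉ C × C`, one has `x⁻¹Hy ⊆ S⁻¹S`. -/
theorem stmt_10 {G : Type*} [Group G] [DecidableEq G] (S : Finset G)
    (h1 : (1 : G) ∈ S) (hgen : Subgroup.closure (S : Set G) = ⊤)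
    (hfaith : IsFaithful S)
    (hcard : (S⁻¹ * S).card ≤ 2 * S.card - 2)
    (hne : (↑(S⁻¹ * S) : Set G) ≠ Set.univ)
    (H : Finset G) (hH : IsAtomOf S H) (h1H : (1 : G) ∈ H)
    (C : Finset G) (hC : ∃ c ∈ S, C = S ∩ (H * {c}))
    (hCmin : ∀ x ∈ S, C.card ≤ (S ∩ (H * {x})).card) :
    ∀ x ∈ S, ∀ y ∈ S, ¬(x ∈ C ∧ y ∈ C) →
      ({x⁻¹} * H * {y} : Finset G) ⊆ S⁻¹ * S := by
  exact stmt_10_general S h1 hfaith hcard hne H hH h1H C hC hCmin
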